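/- arXiv:2507.08622 — 4 statements merged into one kernel-verified Lean document; each statement's English description precedes it below -/
import Mathlib

section
/- Let μ, σ, L > 0 satisfy σ² > μL. Suppose α ∈ (0, π/2) satisfies tan α = (σ²/(μL))·α, and set λ₁ = α²σ²/(2L²) + μ²/(2σ²). Then μ − 2λ₁L ≤ 0. -/
/-!
Along the eigenvalue equation `tan α = (σ² / (μL)) α` one has `λ = μ² / (2σ²) · (1 + tan² α)` and
`μ = μ²L / σ² · (tan α / α)`, so `μ ≤ 2λL` reduces to `tan α / α ≤ 1 + tan² α`. Multiplied by
`cos² α`, this is `sin (2α) / (2α) ≤ 1`. The argument applies to every nonzero root `α` of the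
equation, hence to the higher eigenvalues as well.
-/

theorem tan_div_self_eq_sinc_two_mul {x : ℝ} (hx : x ≠ 0) :
    Real.tan x / x = Real.sinc (2 * x) * (1 + Real.tan x ^ 2) := by
  by_cases hcos : Real.cos x = 0
  · have hsin : Real.sin (2 * x) = 0 := by rw [Real.sin_two_mul, hcos, mul_zero]
    simp [Real.tan_eq_sin_div_cos, hcos, Real.sinc_of_ne_zero, hx, hsin]
  · rw [Real.sinc_of_ne_zero (mul_ne_zero two_ne_zero hx), Real.sin_two_mul,
      ← inv_inv (1 + Real.tan x ^ 2), Real.inv_one_add_tan_sq hcos, Real.tan_eq_sin_div_cos]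
    field_simp

theorem tan_div_self_le_one_add_tan_sq {x : ℝ} (hx : x ≠ 0) :
    Real.tan x / x ≤ 1 + Real.tan x ^ 2 := by
  rw [tan_div_self_eq_sinc_two_mul hx]
  exact mul_le_of_le_one_left (by positivity) (Real.sinc_le_one _)

theorem stmt_0_general {μ σ L α lam : ℝ} (hμ : μ ≠ 0) (hσ : σ ≠ 0) (hL : 0 < L) (hα : α ≠ 0)
    (htan : Real.tan α = (σ ^ 2 / (μ * L)) * α)
    (hlam : lam = α ^ 2 * σ ^ 2 / (2 * L ^ 2) + μ ^ 2 / (2 * σ ^ 2)) :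
    μ - 2 * lam * L ≤ 0 := by
  have hlam_tan : lam = μ ^ 2 / (2 * σ ^ 2) * (1 + Real.tan α ^ 2) := by
    rw [hlam, htan]
    field_simp
    ring
  refine sub_nonpos.mpr ?_
  calc
    μ = μ ^ 2 * L / σ ^ 2 * (Real.tan α / α) := by
      rw [htan]
      field_simp
    _ ≤ μ ^ 2 * L / σ ^ 2 * (1 + Real.tan α ^ 2) := by
      gcongr
      exact tan_div_self_le_one_add_tan_sq hα
    _ = 2 * lam * L := by
      rw [hlam_tan]
      field_simp

theorem stmt_0 (μ σ L α lam : ℝ) (hμ : 0 < μ) (hσ : 0 < σ) (hL : 0 < L)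
    (hreg : σ ^ 2 > μ * L)
    (hα0 : 0 < α) (hα1 : α < Real.pi / 2)
    (htan : Real.tan α = (σ ^ 2 / (μ * L)) * α)
    (hlam : lam = α ^ 2 * σ ^ 2 / (2 * L ^ 2) + μ ^ 2 / (2 * σ ^ 2)) :
    μ - 2 * lam * L ≤ 0 :=
  stmt_0_general hμ.ne' hσ.ne' hL hα0.ne' htan hlam
end

section
/- Let μ ≥ 0, σ > 0, L > 0 with σ² ≥ μL, let z ∈ (0, L], and let α, α₁ be reals with 0 < α₁ ≤ α and −μL + α₁²σ² + μ²L²/σ² > 0. Then |2 · (ασ²/(−μL + α²σ² + μ²L²/σ²)) · exp(−μz/σ²) · sin(αz/L)| ≤ 2 · (z/L) · (α₁²σ²/(−μL + α₁²σ² + μ²L²/σ²)) · exp(−μz/σ²). -/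
/-!
The bound `|sin x| ≤ |x|` replaces the factor `α` by `α ^ 2`, and the resulting ratio
`α ^ 2 * σ ^ 2 / (c + α ^ 2 * σ ^ 2)` decreases in `α ^ 2` because
`c = -μ * L + μ ^ 2 * L ^ 2 / σ ^ 2` is nonpositive when `μ * L ≤ σ ^ 2`.
-/

section LinearOrderedField

variable {K : Type*} [Field K] [LinearOrder K] [IsStrictOrderedRing K] {a b c : K}

theorem sq_div_le_self_of_le (ha : 0 ≤ a) (hab : a ≤ b) : a ^ 2 / b ≤ a := by
  refine div_le_of_le_mul₀ (ha.trans hab) ha ?_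
  rw [sq]
  gcongr

theorem div_const_add_le_div_const_add (hc : c ≤ 0) (hba : b ≤ a) (hb : 0 < c + b) :
    a / (c + a) ≤ b / (c + b) := by
  have hcross : c * a ≤ c * b := mul_le_mul_of_nonpos_left hba hc
  rw [div_le_div_iff₀ (hb.trans_le (by gcongr)) hb]
  linarith

end LinearOrderedField

theorem abs_mul_div_mul_sin_le {a b c s : ℝ} (hc : c ≤ 0) (hba : |b| ≤ |a|)
    (hb : 0 < c + b ^ 2 * s) (t : ℝ) :
    |a * s / (c + a ^ 2 * s) * Real.sin (a * t)| ≤ b ^ 2 * s / (c + b ^ 2 * s) * |t| := by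
  have hs : 0 < s := pos_of_mul_pos_right (by linarith) (sq_nonneg b)
  have hmono : b ^ 2 * s ≤ a ^ 2 * s := mul_le_mul_of_nonneg_right (sq_le_sq.2 hba) hs.le
  have ha : 0 < c + a ^ 2 * s := by linarith
  calc |a * s / (c + a ^ 2 * s) * Real.sin (a * t)|
      ≤ |a * s / (c + a ^ 2 * s)| * |a * t| := by
        rw [abs_mul]
        exact mul_le_mul_of_nonneg_left Real.abs_sin_le_abs (abs_nonneg _)
    _ = |a ^ 2 * s / (c + a ^ 2 * s) * t| := by rw [← abs_mul]; ring_nf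
    _ = a ^ 2 * s / (c + a ^ 2 * s) * |t| := by rw [abs_mul, abs_of_nonneg (by positivity)]
    _ ≤ b ^ 2 * s / (c + b ^ 2 * s) * |t| := by
        gcongr ?_ * |t|
        exact div_const_add_le_div_const_add hc hmono hb

theorem stmt_3_general (μ σ L z α α₁ : ℝ) (hμ : 0 ≤ μ) (hL : 0 < L) (hreg : μ * L ≤ σ ^ 2)
    (hαα : |α₁| ≤ |α|)
    (hden : 0 < -μ * L + α₁ ^ 2 * σ ^ 2 + μ ^ 2 * L ^ 2 / σ ^ 2) :
    |2 * (α * σ ^ 2 / (-μ * L + α ^ 2 * σ ^ 2 + μ ^ 2 * L ^ 2 / σ ^ 2)) *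
        Real.exp (-μ * z / σ ^ 2) * Real.sin (α * z / L)| ≤
      2 * (|z| / L) * (α₁ ^ 2 * σ ^ 2 / (-μ * L + α₁ ^ 2 * σ ^ 2 + μ ^ 2 * L ^ 2 / σ ^ 2)) *
        Real.exp (-μ * z / σ ^ 2) := by
  have hc : -μ * L + μ ^ 2 * L ^ 2 / σ ^ 2 ≤ 0 := by
    have := sq_div_le_self_of_le (mul_nonneg hμ hL.le) hreg
    rw [mul_pow] at this
    linarith
  simp only [add_right_comm (-μ * L)] at hden ⊢
  set c := -μ * L + μ ^ 2 * L ^ 2 / σ ^ 2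
  calc |2 * (α * σ ^ 2 / (c + α ^ 2 * σ ^ 2)) * Real.exp (-μ * z / σ ^ 2) * Real.sin (α * z / L)|
      = 2 * Real.exp (-μ * z / σ ^ 2) *
          |α * σ ^ 2 / (c + α ^ 2 * σ ^ 2) * Real.sin (α * (z / L))| := by
        rw [mul_right_comm 2, mul_assoc, mul_div_assoc α z, abs_mul, abs_of_pos (by positivity)]
    _ ≤ 2 * Real.exp (-μ * z / σ ^ 2) * (α₁ ^ 2 * σ ^ 2 / (c + α₁ ^ 2 * σ ^ 2) * |z / L|) := by
        gcongr
        exact abs_mul_div_mul_sin_le hc hαα hden (z / L)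
    _ = 2 * (|z| / L) * (α₁ ^ 2 * σ ^ 2 / (c + α₁ ^ 2 * σ ^ 2)) * Real.exp (-μ * z / σ ^ 2) := by
        rw [abs_div, abs_of_pos hL]
        ring


theorem stmt_3 (μ σ L z α α₁ : ℝ) (hμ : 0 ≤ μ) (hσ : 0 < σ) (hL : 0 < L)
    (hreg : σ ^ 2 ≥ μ * L) (hz0 : 0 < z) (hzL : z ≤ L)
    (hα₁ : 0 < α₁) (hαα : α₁ ≤ α)
    (hden : -μ * L + α₁ ^ 2 * σ ^ 2 + μ ^ 2 * L ^ 2 / σ ^ 2 > 0) :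
    |2 * (α * σ ^ 2 / (-μ * L + α ^ 2 * σ ^ 2 + μ ^ 2 * L ^ 2 / σ ^ 2)) *
        Real.exp (-μ * z / σ ^ 2) * Real.sin (α * z / L)| ≤
      2 * (z / L) * (α₁ ^ 2 * σ ^ 2 / (-μ * L + α₁ ^ 2 * σ ^ 2 + μ ^ 2 * L ^ 2 / σ ^ 2)) *
        Real.exp (-μ * z / σ ^ 2) := by
  simpa only [abs_of_pos hz0] using
    stmt_3_general μ σ L z α α₁ hμ hL hreg (abs_le_abs_of_nonneg hα₁.le hαα) hden
end

section
/- Let μ, σ, L > 0, let v ∈ (0, μ), let z ∈ (0, L], and assume μσ² ≠ (μ² − v²)L. Then |(v/(μ − (μ² − v²)L/σ²)) · (exp(−(μ − v)z/σ²) − exp(−(μ + v)z/σ²))| ≤ 2 · (z/L) · exp(−μz/σ²) · sinh(vL/σ²) · (σ²v/|μσ² − (μ² − v²)L|). -/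
/-!
Factoring `exp (-μ z / σ²)` out of the difference of exponentials leaves `2 sinh (v z / σ²)`.
Since `sinh` is convex on `[0, ∞)` and vanishes at `0`, its graph lies below the chord from `0`
to `|v| L / σ²`, and evaluating the chord at `|v| z / σ²` produces the factor `z / L`. The
absolute values disappear again because `v sinh (v L / σ²) ≥ 0`.
-/

theorem strictConvexOn_sinh_Ici : StrictConvexOn ℝ (Set.Ici 0) Real.sinh := by
  refine StrictMonoOn.strictConvexOn_of_deriv (convex_Ici 0) Real.continuous_sinh.continuousOn ?_
  rw [Real.deriv_sinh]
  exact Real.cosh_strictMonoOn.mono interior_subset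

theorem sinh_mul_le_mul_sinh {t x : ℝ} (ht0 : 0 ≤ t) (ht1 : t ≤ 1) (hx : 0 ≤ x) :
    Real.sinh (t * x) ≤ t * Real.sinh x := by
  have h := strictConvexOn_sinh_Ici.convexOn.2 (Set.mem_Ici.2 hx) Set.self_mem_Ici ht0
    (sub_nonneg.2 ht1) (add_sub_cancel t 1)
  simpa using h

theorem abs_sinh_mul_le_mul_abs_sinh {t : ℝ} (ht0 : 0 ≤ t) (ht1 : t ≤ 1) (x : ℝ) :
    |Real.sinh (t * x)| ≤ t * |Real.sinh x| := by
  rw [Real.abs_sinh, Real.abs_sinh, abs_mul, abs_of_nonneg ht0]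
  exact sinh_mul_le_mul_sinh ht0 ht1 (abs_nonneg x)

theorem mul_sinh_mul_nonneg {c : ℝ} (hc : 0 ≤ c) (x : ℝ) : 0 ≤ x * Real.sinh (x * c) := by
  rcases le_total 0 x with hx | hx
  · exact mul_nonneg hx (Real.sinh_nonneg_iff.2 (mul_nonneg hx hc))
  · exact mul_nonneg_of_nonpos_of_nonpos hx
      (Real.sinh_nonpos_iff.2 (mul_nonpos_of_nonpos_of_nonneg hx hc))

theorem exp_add_sub_exp_sub (a b : ℝ) :
    Real.exp (a + b) - Real.exp (a - b) = 2 * Real.exp a * Real.sinh b := by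
  rw [Real.sinh_eq, sub_eq_add_neg a b, Real.exp_add, Real.exp_add]
  ring

theorem abs_exp_add_sub_exp_sub_le {t : ℝ} (ht0 : 0 ≤ t) (ht1 : t ≤ 1) (a b : ℝ) :
    |Real.exp (a + t * b) - Real.exp (a - t * b)| ≤ 2 * t * Real.exp a * |Real.sinh b| :=
  calc |Real.exp (a + t * b) - Real.exp (a - t * b)|
      = 2 * Real.exp a * |Real.sinh (t * b)| := by
        rw [exp_add_sub_exp_sub, abs_mul, abs_of_pos (by positivity)]
    _ ≤ 2 * Real.exp a * (t * |Real.sinh b|) := by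
        gcongr
        exact abs_sinh_mul_le_mul_abs_sinh ht0 ht1 b
    _ = 2 * t * Real.exp a * |Real.sinh b| := by ring

theorem stmt_6_general {μ σ L v z : ℝ} (hσ : σ ≠ 0) (hL : 0 < L) (hz0 : 0 ≤ z) (hzL : z ≤ L)
    (hden : μ * σ ^ 2 ≠ (μ ^ 2 - v ^ 2) * L) :
    |(v / (μ - (μ ^ 2 - v ^ 2) * L / σ ^ 2)) *
        (Real.exp (-(μ - v) * z / σ ^ 2) - Real.exp (-(μ + v) * z / σ ^ 2))| ≤
      2 * (z / L) * Real.exp (-μ * z / σ ^ 2) * Real.sinh (v * L / σ ^ 2) *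
        (σ ^ 2 * v / |μ * σ ^ 2 - (μ ^ 2 - v ^ 2) * L|) := by
  set D := μ * σ ^ 2 - (μ ^ 2 - v ^ 2) * L with hD
  have hD0 : D ≠ 0 := sub_ne_zero.2 hden
  have hcoef : v / (μ - (μ ^ 2 - v ^ 2) * L / σ ^ 2) = σ ^ 2 * v / D := by
    have hdiv : μ - (μ ^ 2 - v ^ 2) * L / σ ^ 2 = D / σ ^ 2 := by rw [hD]; field_simp
    rw [hdiv]
    field_simp
  have hplus : -(μ - v) * z / σ ^ 2 = -μ * z / σ ^ 2 + z / L * (v * L / σ ^ 2) := by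
    field_simp
    ring
  have hminus : -(μ + v) * z / σ ^ 2 = -μ * z / σ ^ 2 - z / L * (v * L / σ ^ 2) := by
    field_simp
    ring
  have hsign : |v| * |Real.sinh (v * L / σ ^ 2)| = v * Real.sinh (v * L / σ ^ 2) := by
    rw [← abs_mul, mul_div_assoc, abs_of_nonneg (mul_sinh_mul_nonneg (by positivity) v)]
  rw [hcoef, hplus, hminus, abs_mul, abs_div, abs_mul, abs_sq]
  calc _ ≤ σ ^ 2 * |v| / |D| *
          (2 * (z / L) * Real.exp (-μ * z / σ ^ 2) * |Real.sinh (v * L / σ ^ 2)|) := by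
        gcongr
        exact abs_exp_add_sub_exp_sub_le (div_nonneg hz0 hL.le) ((div_le_one hL).2 hzL) _ _
    _ = 2 * (z / L) * Real.exp (-μ * z / σ ^ 2) *
          (|v| * |Real.sinh (v * L / σ ^ 2)|) * (σ ^ 2 / |D|) := by ring
    _ = 2 * (z / L) * Real.exp (-μ * z / σ ^ 2) * Real.sinh (v * L / σ ^ 2) *
          (σ ^ 2 * v / |D|) := by
        rw [hsign]
        ring

theorem stmt_6 (μ σ L v z : ℝ) (hμ : 0 < μ) (hσ : 0 < σ) (hL : 0 < L)
    (hv : v ∈ Set.Ioo 0 μ) (hz0 : 0 < z) (hzL : z ≤ L)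
    (hden : μ * σ ^ 2 ≠ (μ ^ 2 - v ^ 2) * L) :
    |(v / (μ - (μ ^ 2 - v ^ 2) * L / σ ^ 2)) *
        (Real.exp (-(μ - v) * z / σ ^ 2) - Real.exp (-(μ + v) * z / σ ^ 2))| ≤
      2 * (z / L) * Real.exp (-μ * z / σ ^ 2) * Real.sinh (v * L / σ ^ 2) *
        (σ ^ 2 * v / |μ * σ ^ 2 - (μ ^ 2 - v ^ 2) * L|) :=
  stmt_6_general hσ.ne' hL hz0.le hzL hden
end

section
/- Let μ, σ, L > 0 with σ² < μL. Then there exists a unique v ∈ (0, μ) such that (σ²/(2L)) · ln((μ + v)/(μ − v)) = v. -/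
/-!
With `x = v / μ` the equation becomes `artanh x = r * x` for `r = μ * L / σ ^ 2 > 1`, that is, the
secant of `artanh` from `0` to `x` has slope `r`. Since `artanh` is strictly convex on `[0, 1)`,
this slope is continuous and strictly increasing in `x`; it tends to `deriv artanh 0 = 1` as
`x → 0⁺` and to `∞` as `x → 1⁻`, so it takes the value `r` exactly once.
-/

open Set Filter Topology

section Slope

lemma strictMonoOn_slope_of_strictConvexOn {𝕜 : Type*} [Field 𝕜] [LinearOrder 𝕜]
    [IsStrictOrderedRing 𝕜] {f : 𝕜 → 𝕜} {s : Set 𝕜} {a : 𝕜} (hf : StrictConvexOn 𝕜 s f)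
    (ha : a ∈ s) : StrictMonoOn (slope f a) (s \ {a}) := fun x hx y hy hxy ↦ by
  simpa only [slope_def_field] using hf.secant_strict_mono ha hx.1 hy.1 hx.2 hy.2 hxy

lemma continuousOn_slope {𝕜 E : Type*} [Field 𝕜] [TopologicalSpace 𝕜] [ContinuousSub 𝕜]
    [ContinuousInv₀ 𝕜] [AddCommGroup E] [Module 𝕜 E] [TopologicalSpace E] [ContinuousSub E]
    [ContinuousSMul 𝕜 E] {f : 𝕜 → E} {s : Set 𝕜} {a : 𝕜} (hf : ContinuousOn f s) (ha : a ∉ s) :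
    ContinuousOn (slope f a) s :=
  ((continuousOn_id.sub continuousOn_const).inv₀
    fun _ hx ↦ sub_ne_zero.2 (ne_of_mem_of_not_mem hx ha)).smul (hf.sub continuousOn_const)

variable {f : ℝ → ℝ} {a b : ℝ}

lemma tendsto_slope_atTop {l : Filter ℝ} (hab : a < b) (hl : l ≤ 𝓝 b) (hf : Tendsto f l atTop) :
    Tendsto (slope f a) l atTop := by
  rw [slope_fun_def_field]
  have hinv : Tendsto (fun x ↦ (x - a)⁻¹) l (𝓝 (b - a)⁻¹) :=
    ((tendsto_id.mono_left hl).sub_const a).inv₀ (sub_pos.2 hab).ne'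
  exact (tendsto_atTop_add_const_right _ (-f a) hf).atTop_mul_pos (inv_pos.2 (sub_pos.2 hab)) hinv

lemma existsUnique_slope_eq_of_strictConvexOn {f' m : ℝ} (hab : a < b)
    (hf : StrictConvexOn ℝ (Ico a b) f) (hf' : HasDerivWithinAt f f' (Ioi a) a)
    (hb : Tendsto f (𝓝[<] b) atTop) (hm : f' < m) :
    ∃! x, x ∈ Ioo a b ∧ slope f a x = m := by
  have hmono : StrictMonoOn (slope f a) (Ioo a b) :=
    (strictMonoOn_slope_of_strictConvexOn hf (left_mem_Ico.2 hab)).mono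
      fun x hx ↦ ⟨Ioo_subset_Ico_self hx, hx.1.ne'⟩
  have hcont : ContinuousOn (slope f a) (Ioo a b) :=
    continuousOn_slope (interior_Ico (a := a) (b := b) ▸ hf.convexOn.continuousOn_interior)
      left_notMem_Ioo
  have hleft : Tendsto (slope f a) (𝓝[>] a) (𝓝 f') :=
    (hasDerivWithinAt_iff_tendsto_slope' self_notMem_Ioi).1 hf'
  obtain ⟨x, hx, hxm⟩ := isPreconnected_Ioo.intermediate_value_Ioi
    (le_principal_iff.2 (Ioo_mem_nhdsGT hab)) (le_principal_iff.2 (Ioo_mem_nhdsLT hab)) hcont hleft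
    (tendsto_slope_atTop hab nhdsWithin_le_nhds hb) hm
  exact ⟨x, ⟨hx, hxm⟩, fun y ⟨hy, hym⟩ ↦ hmono.injOn hy hx (hym.trans hxm.symm)⟩

end Slope

section Artanh

open Real

lemma hasDerivAt_artanh {x : ℝ} (hx : x ∈ Ioo (-1) 1) :
    HasDerivAt artanh (1 - x ^ 2)⁻¹ x := by
  have hadd : 0 < 1 + x := by linarith [hx.1]
  have hsub : 0 < 1 - x := by linarith [hx.2]
  have hlog : HasDerivAt (fun y ↦ 1 / 2 * log ((1 + y) / (1 - y))) (1 - x ^ 2)⁻¹ x := by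
    refine (((((hasDerivAt_id x).const_add 1).div ((hasDerivAt_id x).const_sub 1) hsub.ne').log
      (div_pos hadd hsub).ne').const_mul (1 / 2)).congr_deriv ?_
    have hsq : 1 - x ^ 2 = (1 + x) * (1 - x) := by ring
    rw [hsq]
    simp only [id, Pi.div_apply]
    field_simp
    ring
  refine hlog.congr_of_eventuallyEq ?_
  filter_upwards [Ioo_mem_nhds hx.1 hx.2] with y hy
  exact artanh_eq_half_log (Ioo_subset_Icc_self hy)

lemma strictConvexOn_artanh : StrictConvexOn ℝ (Ico 0 1) artanh := by
  have hderiv {x : ℝ} (hx : x ∈ Ico 0 1) : HasDerivAt artanh (1 - x ^ 2)⁻¹ x :=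
    hasDerivAt_artanh ⟨by linarith [hx.1], hx.2⟩
  refine StrictMonoOn.strictConvexOn_of_deriv (convex_Ico 0 1)
    (fun x hx ↦ (hderiv hx).continuousAt.continuousWithinAt) fun x hx y hy hxy ↦ ?_
  have hx' := interior_subset hx
  have hy' := interior_subset hy
  rw [(hderiv hx').deriv, (hderiv hy').deriv]
  have hsq : x ^ 2 < y ^ 2 := pow_lt_pow_left₀ hxy hx'.1 two_ne_zero
  have hy1 : y ^ 2 < 1 := pow_lt_one₀ hy'.1 hy'.2 two_ne_zero
  exact inv_strictAnti₀ (sub_pos.2 hy1) (sub_lt_sub_left hsq 1)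

lemma tendsto_artanh_nhdsLT_one : Tendsto artanh (𝓝[<] 1) atTop := by
  refine tendsto_atTop.2 fun M ↦ ?_
  filter_upwards [Ioo_mem_nhdsLT (tanh_lt_one M)] with x hx
  simpa only [artanh_tanh] using artanh_le_artanh (neg_one_lt_tanh M) hx.2 hx.1.le

lemma existsUnique_artanh_eq_mul {r : ℝ} (hr : 1 < r) :
    ∃! x, x ∈ Ioo 0 1 ∧ artanh x = r * x := by
  have hderiv : HasDerivAt artanh 1 0 := by
    simpa using hasDerivAt_artanh (x := 0) (by norm_num)
  refine (existsUnique_congr fun x ↦ and_congr_right fun hx ↦ ?_).1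
    (existsUnique_slope_eq_of_strictConvexOn one_pos strictConvexOn_artanh
      hderiv.hasDerivWithinAt tendsto_artanh_nhdsLT_one hr)
  rw [slope_def_field, artanh_zero, sub_zero, sub_zero, div_eq_iff hx.1.ne']

lemma log_add_mul_div_sub_mul_eq_two_mul_artanh {μ x : ℝ} (hμ : μ ≠ 0) (hx : x ∈ Icc (-1) 1) :
    log ((μ + μ * x) / (μ - μ * x)) = 2 * artanh x := by
  rw [artanh_eq_half_log hx, ← mul_one_add, ← mul_one_sub, mul_div_mul_left _ _ hμ]
  ring

end Artanh

theorem stmt_12 (μ σ L : ℝ) (hμ : 0 < μ) (hσ : 0 < σ) (hL : 0 < L) (h : σ ^ 2 < μ * L) :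
    ∃! v : ℝ, v ∈ Set.Ioo 0 μ ∧ (σ ^ 2 / (2 * L)) * Real.log ((μ + v) / (μ - v)) = v := by
  have hr : 1 < μ * L / σ ^ 2 := (one_lt_div (by positivity)).2 h
  refine ((Equiv.mulLeft₀ μ hμ.ne').existsUnique_congr fun x ↦ ?_).1 (existsUnique_artanh_eq_mul hr)
  have hmem : x ∈ Ioo 0 1 ↔ μ * x ∈ Ioo 0 μ := by
    simp only [mem_Ioo, mul_pos_iff_of_pos_left hμ, mul_lt_iff_lt_one_right hμ]
  rw [Equiv.mulLeft₀_apply, ← hmem]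
  refine and_congr_right fun hx ↦ ?_
  rw [log_add_mul_div_sub_mul_eq_two_mul_artanh hμ.ne' ⟨by linarith [hx.1], hx.2.le⟩]
  field_simp
end
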